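/- Let ABCDE be a strictly convex equilateral pentagon whose interior angles satisfy 2α + β = 2π and 2δ + γ = 2π (type 8 conditions). Then ε = π − β and α = π − β/2; in particular, all five interior angles are determined by β. -/

import Mathlib

/-!
Identify edge vectors with complex numbers, and put `x = β / 2`, `y = γ / 2`.  For a counterclockwise
equilateral pentagon, each edge is the previous one multiplied by `-exp (-iθ)`, where `θ` is the
interior angle at the common vertex (`turn`).  Since `α = π - x` and `δ = π - y`, with `u = BC` the
other edges are `CD = -u exp (-2iy)`, `DE = -u exp (-iy)`, `EA = -u exp (ix)`, `AB = -u exp (2ix)`.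
The edges sum to zero, so with `f t = exp (it) + exp (2it)` one gets `f x + conj (f y) = 1`.

Because `|f t|² = 2 + 2 cos t`, comparing moduli gives `cos x = cos y` or `cos x + cos y = 1 / 2`; the
latter contradicts the real part of the closing relation, as both cosines are positive
(`cos_eq_of_closing`).  Hence `β = γ`, and `EA = DE * exp (iβ)` yields `ε = π - β`.  The clockwise
case follows by reading the pentagon as `D, C, B, A, E`.
-/

open EuclideanGeometry

/-- Signed area determinant of two plane vectors. -/
noncomputable def det2 (u v : EuclideanSpace ℝ (Fin 2)) : ℝ :=
  u 0 * v 1 - u 1 * v 0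

/-- `R` lies strictly to the left of the directed line from `P` to `Q`. -/
def SLeft (P Q R : EuclideanSpace ℝ (Fin 2)) : Prop :=
  0 < det2 (Q - P) (R - P)

/-- The five points are in strictly convex position, listed in counterclockwise
cyclic order along their convex hull (in particular no three are collinear):
for every directed edge of the pentagon, all remaining vertices lie strictly to its left. -/
def CcwConvex5 (A B C D E : EuclideanSpace ℝ (Fin 2)) : Prop :=
  SLeft A B C ∧ SLeft A B D ∧ SLeft A B E ∧
  SLeft B C D ∧ SLeft B C E ∧ SLeft B C A ∧
  SLeft C D E ∧ SLeft C D A ∧ SLeft C D B ∧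
  SLeft D E A ∧ SLeft D E B ∧ SLeft D E C ∧
  SLeft E A B ∧ SLeft E A C ∧ SLeft E A D

/-- The five points are in strictly convex position, listed in cyclic order
(either orientation) along their convex hull, with no three collinear. -/
def ConvexPos5 (A B C D E : EuclideanSpace ℝ (Fin 2)) : Prop :=
  CcwConvex5 A B C D E ∨ CcwConvex5 E D C B A

/-- The pentagon `ABCDE` is equilateral. -/
def Equilateral5 (A B C D E : EuclideanSpace ℝ (Fin 2)) : Prop :=
  dist A B = dist B C ∧ dist B C = dist C D ∧ dist C D = dist D E ∧ dist D E = dist E A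

/-- In a counterclockwise turn at `Q` with equal sides, the edge `QR` is the edge `PQ` rotated by the
exterior angle `π - ∠ P Q R`. -/
lemma turn (P Q R : EuclideanSpace ℝ (Fin 2)) (hd : dist P Q = dist Q R) (hl : SLeft P Q R) :
    0 < Real.sin (∠ P Q R) ∧
    R 0 - Q 0 = -Real.cos (∠ P Q R) * (Q 0 - P 0) - Real.sin (∠ P Q R) * (Q 1 - P 1) ∧
    R 1 - Q 1 = -Real.cos (∠ P Q R) * (Q 1 - P 1) + Real.sin (∠ P Q R) * (Q 0 - P 0) := by
  have hcos := InnerProductGeometry.cos_angle_mul_norm_mul_norm (P -ᵥ Q) (R -ᵥ Q)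
  have hs0 : 0 ≤ Real.sin (∠ P Q R) := InnerProductGeometry.sin_angle_nonneg _ _
  have hsc := Real.sin_sq_add_cos_sq (∠ P Q R)
  change Real.cos (∠ P Q R) * _ = _ at hcos
  have hPQ : ‖P -ᵥ Q‖ = dist P Q := (dist_eq_norm_vsub _ P Q).symm
  have hRQ : ‖R -ᵥ Q‖ = dist P Q := by rw [hd, dist_comm]; exact (dist_eq_norm_vsub _ R Q).symm
  have hL1 : dist P Q ^ 2 = (Q 0 - P 0) ^ 2 + (Q 1 - P 1) ^ 2 := by
    rw [EuclideanSpace.dist_eq, Real.sq_sqrt (by positivity)]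
    simp only [Fin.sum_univ_two, Real.dist_eq, sq_abs]; ring
  have hL2 : dist P Q ^ 2 = (R 0 - Q 0) ^ 2 + (R 1 - Q 1) ^ 2 := by
    rw [hd, EuclideanSpace.dist_eq, Real.sq_sqrt (by positivity)]
    simp only [Fin.sum_univ_two, Real.dist_eq, sq_abs]; ring
  rw [hPQ, hRQ] at hcos
  simp only [vsub_eq_sub, PiLp.inner_apply, Fin.sum_univ_two, PiLp.sub_apply, RCLike.inner_apply,
    conj_trivial] at hcos
  simp only [SLeft, det2, PiLp.sub_apply] at hl
  generalize Real.sin (∠ P Q R) = s at *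
  generalize Real.cos (∠ P Q R) = c at *
  obtain ⟨a, ha⟩ : ∃ a, a = Q 0 - P 0 := ⟨_, rfl⟩
  obtain ⟨b, hb⟩ : ∃ b, b = Q 1 - P 1 := ⟨_, rfl⟩
  obtain ⟨p, hp⟩ : ∃ p, p = R 0 - Q 0 := ⟨_, rfl⟩
  obtain ⟨q, hq⟩ : ∃ q, q = R 1 - Q 1 := ⟨_, rfl⟩
  have hdet : 0 < a * q - b * p := by rw [ha, hb, hp, hq]; linarith
  have hin : c * dist P Q ^ 2 = -(a * p + b * q) := by rw [ha, hb, hp, hq]; linarith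
  rw [← ha, ← hb] at hL1
  rw [← hp, ← hq] at hL2
  rw [← ha, ← hb, ← hp, ← hq]
  generalize dist P Q ^ 2 = M at *
  have hM : 0 < M := by
    rcases (show 0 ≤ M by rw [hL1]; positivity).lt_or_eq with h | h
    · exact h
    · have ha0 : a = 0 := by nlinarith
      have hb0 : b = 0 := by nlinarith
      simp [ha0, hb0] at hdet
  have hsM : s * M = a * q - b * p := by
    have h2 : (s * M) ^ 2 = (a * q - b * p) ^ 2 := by
      have : (c * M) ^ 2 = (a * p + b * q) ^ 2 := by rw [hin]; ring
      have h3 : M ^ 2 = (a ^ 2 + b ^ 2) * (p ^ 2 + q ^ 2) := by rw [← hL1, ← hL2]; ring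
      linear_combination M ^ 2 * hsc - this + h3
    exact (sq_eq_sq₀ (by positivity) hdet.le).1 h2
  refine ⟨by by_contra h; nlinarith, ?_, ?_⟩ <;> apply mul_left_cancel₀ hM.ne'
  · linear_combination p * hL1 + a * hin + b * hsM
  · linear_combination q * hL1 + b * hin - a * hsM

/-- Comparing the squared moduli of `f x` and `1 - conj (f y)`, where `f t = exp (it) + exp (2it)`;
here `X, S` and `Y, T` are the cosines and sines of `x` and `y`. -/
lemma cos_eq_of_closing (X S Y T : ℝ) (hX : 0 < X) (hY : 0 < Y) (hXS : S ^ 2 + X ^ 2 = 1)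
    (hYT : T ^ 2 + Y ^ 2 = 1) (hre : X + Y + (2 * X ^ 2 - 1) + (2 * Y ^ 2 - 1) = 1)
    (him : S + 2 * S * X = T + 2 * T * Y) : X = Y := by
  have key : (X - Y) * (2 * X + 2 * Y - 1) = 0 := by
    have h2 : (S + 2 * S * X) ^ 2 = (T + 2 * T * Y) ^ 2 := by rw [him]
    linear_combination -(2 * X ^ 2 + X - 2 * Y ^ 2 - Y) * hre - h2 + (1 + 2 * X) ^ 2 * hXS
      - (1 + 2 * Y) ^ 2 * hYT
  rcases mul_eq_zero.1 key with h | h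
  · linarith
  · nlinarith [mul_pos hX hY]

lemma ccw_case (A B C D E : EuclideanSpace ℝ (Fin 2))
    (hconv : CcwConvex5 A B C D E) (hequi : Equilateral5 A B C D E)
    (h1 : 2 * ∠ E A B + ∠ A B C = 2 * Real.pi) (h2 : 2 * ∠ C D E + ∠ B C D = 2 * Real.pi) :
    ∠ A B C = ∠ B C D ∧ ∠ D E A = Real.pi - ∠ A B C := by
  obtain ⟨e1, e2, e3, e4⟩ := hequi
  obtain ⟨hABC, -, -, hBCD, -, -, hCDE, -, -, hDEA, -, -, hEAB, -, -⟩ := hconv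
  obtain ⟨pA, A0, A1⟩ := turn E A B (by linarith) hEAB
  obtain ⟨pB, B0, B1⟩ := turn A B C e1 hABC
  obtain ⟨pC, C0, C1⟩ := turn B C D e2 hBCD
  obtain ⟨pD, D0, D1⟩ := turn C D E e3 hCDE
  obtain ⟨pE, E0, E1⟩ := turn D E A e4 hDEA
  have rB : 0 ≤ ∠ A B C ∧ ∠ A B C ≤ Real.pi := ⟨angle_nonneg _ _ _, angle_le_pi _ _ _⟩
  have rC : 0 ≤ ∠ B C D ∧ ∠ B C D ≤ Real.pi := ⟨angle_nonneg _ _ _, angle_le_pi _ _ _⟩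
  have rE : 0 ≤ ∠ D E A ∧ ∠ D E A ≤ Real.pi := ⟨angle_nonneg _ _ _, angle_le_pi _ _ _⟩
  have hu : 0 < (C 0 - B 0) ^ 2 + (C 1 - B 1) ^ 2 := by
    by_contra! h
    have ha0 : C 0 - B 0 = 0 := by
      refine pow_eq_zero_iff two_ne_zero |>.1 (le_antisymm ?_ (sq_nonneg _))
      linarith only [h, sq_nonneg (C 0 - B 0), sq_nonneg (C 1 - B 1)]
    have hb0 : C 1 - B 1 = 0 := by
      refine pow_eq_zero_iff two_ne_zero |>.1 (le_antisymm ?_ (sq_nonneg _))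
      linarith only [h, sq_nonneg (C 0 - B 0), sq_nonneg (C 1 - B 1)]
    simp [SLeft, det2, ha0, hb0] at hBCD
  obtain ⟨x, hx⟩ : ∃ x, ∠ A B C = 2 * x := ⟨∠ A B C / 2, by ring⟩
  obtain ⟨y, hy⟩ : ∃ y, ∠ B C D = 2 * y := ⟨∠ B C D / 2, by ring⟩
  have hA : ∠ E A B = Real.pi - x := by linarith
  have hD : ∠ C D E = Real.pi - y := by linarith
  rw [hA] at A0 A1
  rw [hD] at D0 D1
  rw [hx] at B0 B1 pB rB ⊢
  rw [hy] at C0 C1 pC rC ⊢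
  have hpi := Real.pi_pos
  have hx2 : x < Real.pi / 2 := by
    rcases rB.2.lt_or_eq with h | h
    · linarith
    · rw [h, Real.sin_pi] at pB; exact absurd pB (lt_irrefl _)
  have hy2 : y < Real.pi / 2 := by
    rcases rC.2.lt_or_eq with h | h
    · linarith
    · rw [h, Real.sin_pi] at pC; exact absurd pC (lt_irrefl _)
  have hX : 0 < Real.cos x := Real.cos_pos_of_mem_Ioo ⟨by linarith, hx2⟩
  have hY : 0 < Real.cos y := Real.cos_pos_of_mem_Ioo ⟨by linarith, hy2⟩
  have hXS := Real.sin_sq_add_cos_sq x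
  have hYT := Real.sin_sq_add_cos_sq y
  rw [Real.cos_pi_sub, Real.sin_pi_sub] at A0 A1 D0 D1
  rw [Real.cos_two_mul, Real.sin_two_mul] at B0 B1 C0 C1
  have hcx := Real.cos_two_mul x
  generalize hXd : Real.cos x = X at *
  generalize Real.sin x = S at *
  generalize hYd : Real.cos y = Y at *
  generalize Real.sin y = T at *
  obtain ⟨a, ha⟩ : ∃ a, a = C 0 - B 0 := ⟨_, rfl⟩
  obtain ⟨b, hb⟩ : ∃ b, b = C 1 - B 1 := ⟨_, rfl⟩
  rw [← ha] at B0 C0 C1 hu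
  rw [← hb] at B1 C0 C1 hu
  have hS : S ^ 2 = 1 - X ^ 2 := by linarith
  have hT : T ^ 2 = 1 - Y ^ 2 := by linarith
  -- `DE`, `AB` and `EA` as rotations of `BC = (a, b)`
  have DE0 : E 0 - D 0 = -(Y * a + T * b) := by
    rw [D0, C0, C1]; linear_combination (-2 * a * Y) * hT
  have DE1 : E 1 - D 1 = -(Y * b - T * a) := by
    rw [D1, C0, C1]; linear_combination (-2 * b * Y) * hT
  have AB0 : B 0 - A 0 = -((2 * X ^ 2 - 1) * a - 2 * S * X * b) := by
    rw [B0, B1]; linear_combination (-4 * X ^ 2 * (B 0 - A 0)) * hS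
  have AB1 : B 1 - A 1 = -((2 * X ^ 2 - 1) * b + 2 * S * X * a) := by
    rw [B0, B1]; linear_combination (-4 * X ^ 2 * (B 1 - A 1)) * hS
  have EA0 : A 0 - E 0 = -(X * a - S * b) := by
    linear_combination X * (AB0 - A0) + S * (AB1 - A1) - (A 0 - E 0 + 2 * X * a) * hXS
  have EA1 : A 1 - E 1 = -(X * b + S * a) := by
    linear_combination X * (AB1 - A1) - S * (AB0 - A0) - (A 1 - E 1 + 2 * X * b) * hXS
  have F0 : a * (1 - (X + Y + (2 * X ^ 2 - 1) + (2 * Y ^ 2 - 1)))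
      + b * (S + 2 * S * X - T - 2 * T * Y) = 0 := by
    linear_combination ha - C0 - DE0 - EA0 - AB0
  have F1 : b * (1 - (X + Y + (2 * X ^ 2 - 1) + (2 * Y ^ 2 - 1)))
      - a * (S + 2 * S * X - T - 2 * T * Y) = 0 := by
    linear_combination hb - C1 - DE1 - EA1 - AB1
  have hre : 1 - (X + Y + (2 * X ^ 2 - 1) + (2 * Y ^ 2 - 1)) = 0 := by
    apply mul_left_cancel₀ hu.ne'
    linear_combination a * F0 + b * F1
  have him : S + 2 * S * X - T - 2 * T * Y = 0 := by
    apply mul_left_cancel₀ hu.ne'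
    linear_combination b * F0 - a * F1
  have hXY : X = Y :=
    cos_eq_of_closing X S Y T hX hY hXS hYT (by linarith) (by linarith)
  have hxy : x = y := Real.injOn_cos ⟨by linarith, by linarith⟩ ⟨by linarith, by linarith⟩
    (by rw [hXd, hYd, hXY])
  have hST : S = T := by
    have : (1 + 2 * X) * (S - T) = 0 := by rw [← hXY] at him; linarith
    rcases mul_eq_zero.1 this with h | h <;> linarith
  refine ⟨by rw [hxy], ?_⟩
  refine Real.injOn_cos ⟨rE.1, rE.2⟩ ⟨by linarith, by linarith⟩ ?_
  rw [Real.cos_pi_sub, hcx]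
  rw [DE0, DE1, EA0] at E0
  rw [DE0, DE1, EA1] at E1
  rw [← hXY, ← hST] at E0 E1
  generalize Real.cos (∠ D E A) = c at *
  generalize Real.sin (∠ D E A) = s at *
  apply mul_left_cancel₀ hu.ne'
  -- the inner product of `DE` and `EA` is `-cos ε` times the squared side length
  linear_combination (-(X * a + S * b)) * E0 - (X * b - S * a) * E1
    - (a ^ 2 + b ^ 2) * (c - 1) * hXS

theorem type8_angles_from_beta
    (A B C D E : EuclideanSpace ℝ (Fin 2)) (α β γ δ ε : ℝ)
    (hconv : ConvexPos5 A B C D E) (hequi : Equilateral5 A B C D E)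
    (hα : α = ∠ E A B) (hβ : β = ∠ A B C) (hγ : γ = ∠ B C D)
    (hδ : δ = ∠ C D E) (hε : ε = ∠ D E A)
    (h1 : 2 * α + β = 2 * Real.pi) (h2 : 2 * δ + γ = 2 * Real.pi) :
    ε = Real.pi - β ∧ α = Real.pi - β / 2 := by
  refine ⟨?_, by linarith⟩
  subst hα hβ hγ hδ hε
  rcases hconv with h | h
  · exact (ccw_case A B C D E h hequi h1 h2).2
  · obtain ⟨e1, e2, e3, e4⟩ := hequi
    obtain ⟨a1, a2, a3, b1, b2, b3, c1, c2, c3, d1, d2, d3, f1, f2, f3⟩ := h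
    have := ccw_case D C B A E
      ⟨b1, b2, b3, c1, c2, c3, d1, d2, d3, f1, f2, f3, a1, a2, a3⟩
      ⟨by rw [dist_comm D C, dist_comm C B]; exact e2.symm,
        by rw [dist_comm C B, dist_comm B A]; exact e1.symm,
        by rw [dist_comm B A, dist_comm A E]; linarith,
        by rw [dist_comm A E, dist_comm E D]; exact e4.symm⟩
      (by rw [angle_comm E D C, angle_comm D C B]; exact h2)
      (by rw [angle_comm B A E, angle_comm C B A]; exact h1)
    rw [angle_comm D C B, angle_comm C B A, angle_comm A E D] at this
    rw [this.2, this.1]
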